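/- Let n ≥ 1 and suppose (A,b) satisfies Setting B with constant δ ∈ (n/(n+π²),1]. Define γ := tr A/(|A|² + |b|²), Ã := γA, b̃ := γb, κ := (δ − n/(n+π²))·(n+π²)/π², and for continuously differentiable ℤⁿ-periodic vector fields v,w : ℝⁿ → ℝⁿ set B₂(v,w) := ∫_Y (∇·v)(Ã:Dw + b̃·w) + (1/2)∫_Y (Dv − (Dv)ᵀ):(Dw − (Dw)ᵀ). Then for every continuously differentiable ℤⁿ-periodic w : ℝⁿ → ℝⁿ with ∫_Y w = 0 there holds B₂(w,w) ≥ (1 − √(1−κ)) ∫_Y |Dw|², where Dw is the Jacobian matrix, ∇·w = tr(Dw), and |Dw| the Frobenius norm. -/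

import Mathlib

open MeasureTheory

noncomputable section

/-- The unit cell `Y = (0,1)^n`. -/
def unitCell (n : ℕ) : Set (Fin n → ℝ) := Set.univ.pi fun _ => Set.Ioo (0 : ℝ) 1

/-- Frobenius norm squared of a matrix. -/
def frobSq {n : ℕ} (M : Matrix (Fin n) (Fin n) ℝ) : ℝ := ∑ i, ∑ j, (M i j) ^ 2

/-- Frobenius inner product of two matrices. -/
def frobInner {n : ℕ} (M N : Matrix (Fin n) (Fin n) ℝ) : ℝ := ∑ i, ∑ j, M i j * N i j

/-- Euclidean norm squared of a vector. -/
def euclSq {n : ℕ} (v : Fin n → ℝ) : ℝ := ∑ i, (v i) ^ 2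

/-- Euclidean dot product. -/
def dotc {n : ℕ} (v w : Fin n → ℝ) : ℝ := ∑ i, v i * w i

/-- `ℤⁿ`-periodicity of a function on `ℝⁿ`. -/
def IsPeriodic {n : ℕ} {α : Type*} (f : (Fin n → ℝ) → α) : Prop :=
  ∀ (x : Fin n → ℝ) (k : Fin n → ℤ), f (x + fun i => (k i : ℝ)) = f x

/-- Partial derivative in direction `i`. -/
def pd {n : ℕ} (f : (Fin n → ℝ) → ℝ) (i : Fin n) (x : Fin n → ℝ) : ℝ :=
  fderiv ℝ f x (Pi.single i 1)

/-- Gradient. -/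
def grad {n : ℕ} (f : (Fin n → ℝ) → ℝ) (x : Fin n → ℝ) : Fin n → ℝ := fun i => pd f i x

/-- Hessian matrix. -/
def hess {n : ℕ} (f : (Fin n → ℝ) → ℝ) (x : Fin n → ℝ) : Matrix (Fin n) (Fin n) ℝ :=
  Matrix.of fun i j => pd (pd f j) i x

/-- Laplacian. -/
def lap {n : ℕ} (f : (Fin n → ℝ) → ℝ) (x : Fin n → ℝ) : ℝ := ∑ i, pd (pd f i) i x

/-- Jacobian matrix of a vector field: `(jac w x) i j = ∂_j w_i (x)`. -/
def jac {n : ℕ} (w : (Fin n → ℝ) → Fin n → ℝ) (x : Fin n → ℝ) : Matrix (Fin n) (Fin n) ℝ :=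
  Matrix.of fun i j => pd (fun y => w y i) j x

/-- Divergence of a vector field. -/
def divg {n : ℕ} (w : (Fin n → ℝ) → Fin n → ℝ) (x : Fin n → ℝ) : ℝ :=
  ∑ i, pd (fun y => w y i) i x

/-- Setting B: symmetric-valued, measurable, `ℤⁿ`-periodic, essentially bounded coefficients,
uniform ellipticity, and the Cordes-type condition with constant `δ ∈ (n/(n+π²), 1]`. -/
structure SettingB {n : ℕ} (A : (Fin n → ℝ) → Matrix (Fin n) (Fin n) ℝ)
    (b : (Fin n → ℝ) → Fin n → ℝ) (lam Lam δ : ℝ) : Prop where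
  symm : ∀ x, (A x).IsSymm
  measA : ∀ i j, Measurable fun x => A x i j
  measb : ∀ i, Measurable fun x => b x i
  perA : IsPeriodic A
  perb : IsPeriodic b
  bddA : ∃ C : ℝ, ∀ᵐ x ∂(volume : Measure (Fin n → ℝ)), frobSq (A x) ≤ C
  bddb : ∃ C : ℝ, ∀ᵐ x ∂(volume : Measure (Fin n → ℝ)), euclSq (b x) ≤ C
  lam_pos : 0 < lam
  lam_le_Lam : lam ≤ Lam
  ellip : ∀ᵐ x ∂(volume : Measure (Fin n → ℝ)), ∀ ξ : Fin n → ℝ,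
    lam * euclSq ξ ≤ dotc ξ (Matrix.mulVec (A x) ξ) ∧
      dotc ξ (Matrix.mulVec (A x) ξ) ≤ Lam * euclSq ξ
  delta_mem : δ ∈ Set.Ioc ((n : ℝ) / ((n : ℝ) + Real.pi ^ 2)) 1
  cordes : ∀ᵐ x ∂(volume : Measure (Fin n → ℝ)),
    (frobSq (A x) + euclSq (b x)) / (Matrix.trace (A x)) ^ 2 ≤ 1 / ((n : ℝ) - 1 + δ)

/-- The renormalization function `γ = tr A / (|A|² + |b|²)`. -/
def gam {n : ℕ} (A : (Fin n → ℝ) → Matrix (Fin n) (Fin n) ℝ)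
    (b : (Fin n → ℝ) → Fin n → ℝ) (x : Fin n → ℝ) : ℝ :=
  Matrix.trace (A x) / (frobSq (A x) + euclSq (b x))

/-- The constant `κ = (δ − n/(n+π²))·(n+π²)/π²`. -/
def kappa (n : ℕ) (δ : ℝ) : ℝ :=
  (δ - (n : ℝ) / ((n : ℝ) + Real.pi ^ 2)) * (((n : ℝ) + Real.pi ^ 2) / Real.pi ^ 2)

/-- The invariant measure: measurable, `ℤⁿ`-periodic, square-integrable over `Y`,
with unit mass over `Y`, solving the stationary FPK equation in the very weak sense. -/
def IsInvariantMeasure {n : ℕ} (A : (Fin n → ℝ) → Matrix (Fin n) (Fin n) ℝ)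
    (b : (Fin n → ℝ) → Fin n → ℝ) (r : (Fin n → ℝ) → ℝ) : Prop :=
  Measurable r ∧ IsPeriodic r ∧
    IntegrableOn (fun x => (r x) ^ 2) (unitCell n) ∧
    (∫ x in unitCell n, r x) = 1 ∧
    ∀ φ : (Fin n → ℝ) → ℝ, ContDiff ℝ 2 φ → IsPeriodic φ →
      (∫ x in unitCell n,
        r x * (frobInner (A x) (hess φ x) + dotc (b x) (grad φ x))) = 0

/-- The bilinear form `B₂`. -/
def B2 {n : ℕ} (A : (Fin n → ℝ) → Matrix (Fin n) (Fin n) ℝ)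
    (b : (Fin n → ℝ) → Fin n → ℝ) (v w : (Fin n → ℝ) → Fin n → ℝ) : ℝ :=
  (∫ x in unitCell n,
    divg v x * (frobInner (gam A b x • A x) (jac w x) + dotc (gam A b x • b x) (w x)))
  + (1 / 2) * ∫ x in unitCell n,
      frobInner (jac v x - (jac v x).transpose) (jac w x - (jac w x).transpose)

/-- Fourier coefficient over the unit cell. -/
def cellFourierCoeff {n : ℕ} (f : (Fin n → ℝ) → ℝ) (k : Fin n → ℤ) : ℂ :=
  ∫ x in unitCell n, UnitAddTorus.mFourier (-k) (fun i => (x i : UnitAddCircle)) * (f x : ℂ)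

theorem unitCell_ae_eq_Icc (n : ℕ) :
    unitCell n =ᵐ[volume] Set.Icc (0 : Fin n → ℝ) 1 :=
  Measure.univ_pi_Ioo_ae_eq_Icc

theorem setOf_Ioc_ae_eq_unitCell (n : ℕ) :
    {x : Fin n → ℝ | ∀ i, x i ∈ Set.Ioc ((0 : Fin n → ℝ) i) ((0 : Fin n → ℝ) i + 1)}
      =ᵐ[volume] unitCell n := by
  have h := Measure.univ_pi_Ioc_ae_eq_Icc (μ := fun _ : Fin n => (volume : Measure ℝ))
    (f := 0) (g := 1)
  refine Filter.EventuallyEq.trans ?_ (h.trans (unitCell_ae_eq_Icc n).symm)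
  have : {x : Fin n → ℝ | ∀ i, x i ∈ Set.Ioc ((0 : Fin n → ℝ) i) ((0 : Fin n → ℝ) i + 1)}
    = Set.univ.pi fun i : Fin n => Set.Ioc ((0 : Fin n → ℝ) i) ((1 : Fin n → ℝ) i) := by
    ext x; simp [Set.mem_pi]
  rw [this]
  rfl

/-- The function on the torus that agrees with `f` on the cell `(0,1]ⁿ`. -/
def torusLift {n : ℕ} (f : (Fin n → ℝ) → ℝ) (t : UnitAddTorus (Fin n)) : ℂ :=
  f (UnitAddTorus.measurableEquivPiIoc (0 : Fin n → ℝ) t).1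

theorem torusLift_coe {n : ℕ} (f : (Fin n → ℝ) → ℝ) {x : Fin n → ℝ}
    (hx : ∀ i, x i ∈ Set.Ioc ((0 : Fin n → ℝ) i) ((0 : Fin n → ℝ) i + 1)) :
    torusLift f (fun i => (x i : UnitAddCircle)) = f x := by
  have := (UnitAddTorus.measurableEquivPiIoc (0 : Fin n → ℝ)).apply_symm_apply ⟨x, hx⟩
  rw [UnitAddTorus.coe_symm_measurableEquivPiIoc_apply] at this
  rw [torusLift, this]

section Torus

attribute [local instance] instMeasureSpaceUnitAddCircle

theorem memLp_torusLift {n : ℕ} {f : (Fin n → ℝ) → ℝ} (hf : Continuous f) :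
    MemLp (torusLift f) 2 (volume : Measure (UnitAddTorus (Fin n))) := by
  have : IsProbabilityMeasure (volume : Measure UnitAddCircle) :=
    inferInstanceAs (IsProbabilityMeasure AddCircle.haarAddCircle)
  obtain ⟨C, hC⟩ := (isCompact_Icc (a := (0 : Fin n → ℝ)) (b := 1)).exists_bound_of_continuousOn
    hf.continuousOn
  have hm : Measurable (torusLift f) :=
    Complex.measurable_ofReal.comp (hf.measurable.comp
      (measurable_subtype_coe.comp (UnitAddTorus.measurableEquivPiIoc _).measurable))
  refine MemLp.of_bound hm.aestronglyMeasurable C (Filter.Eventually.of_forall fun t => ?_)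
  rw [torusLift, Complex.norm_real]
  have h := (UnitAddTorus.measurableEquivPiIoc (0 : Fin n → ℝ) t).2
  refine hC _ ⟨fun i => (h i).1.le, fun i => ?_⟩
  simpa using (h i).2

theorem mFourierCoeff_torusLift {n : ℕ} (f : (Fin n → ℝ) → ℝ) (k : Fin n → ℤ) :
    UnitAddTorus.mFourierCoeff (torusLift f) k = cellFourierCoeff f k := by
  rw [UnitAddTorus.mFourierCoeff_eq_integral _ _ 0, cellFourierCoeff,
    ← setIntegral_congr_set (setOf_Ioc_ae_eq_unitCell n)]
  refine setIntegral_congr_fun (MeasurableSet.univ_pi' fun i => measurableSet_Ioc) fun x hx => ?_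
  simp only [torusLift_coe f hx, smul_eq_mul]

theorem hasSum_cellFourierCoeff {n : ℕ} {f g : (Fin n → ℝ) → ℝ} (hf : Continuous f)
    (hg : Continuous g) :
    HasSum (fun k => starRingEnd ℂ (cellFourierCoeff f k) * cellFourierCoeff g k)
      ((∫ x in unitCell n, f x * g x : ℝ) : ℂ) := by
  have h := UnitAddTorus.hasSum_prod_mFourierCoeff ((memLp_torusLift hf).toLp _)
    ((memLp_torusLift hg).toLp _)
  have hc : ∀ {u : (Fin n → ℝ) → ℝ} (hu : Continuous u) (k : Fin n → ℤ),
      UnitAddTorus.mFourierCoeff ((memLp_torusLift hu).toLp _) k = cellFourierCoeff u k := by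
    intro u hu k
    rw [← mFourierCoeff_torusLift]
    refine integral_congr_ae ?_
    filter_upwards [(memLp_torusLift hu).coeFn_toLp] with t ht
    rw [ht]
  simp_rw [hc hf, hc hg] at h
  convert h using 1
  have h1 : ∫ t, starRingEnd ℂ (((memLp_torusLift hf).toLp _) t) * ((memLp_torusLift hg).toLp _) t
      = ∫ t, starRingEnd ℂ (torusLift f t) * torusLift g t := by
    refine integral_congr_ae ?_
    filter_upwards [(memLp_torusLift hf).coeFn_toLp, (memLp_torusLift hg).coeFn_toLp] with t h h'
    rw [h, h']
  rw [h1, UnitAddTorus.integral_preimage _ 0, ← integral_complex_ofReal,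
    ← setIntegral_congr_set (setOf_Ioc_ae_eq_unitCell n)]
  refine setIntegral_congr_fun (MeasurableSet.univ_pi' fun i => measurableSet_Ioc) fun x hx => ?_
  simp [torusLift_coe f hx, torusLift_coe g hx]

end Torus

theorem integral_fderiv_apply_single_eq_zero {n : ℕ} {h : (Fin n → ℝ) → ℂ} (hh : ContDiff ℝ 1 h)
    (hper : IsPeriodic h) (j : Fin n) :
    ∫ x in unitCell n, fderiv ℝ h x (Pi.single j 1) = 0 := by
  obtain _ | m := n
  · exact j.elim0
  rw [setIntegral_congr_set (unitCell_ae_eq_Icc _)]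
  have hdiv := integral_divergence_of_hasFDerivAt_off_countable' (0 : Fin (m + 1) → ℝ) 1
    zero_le_one (fun i => if i = j then h else 0)
    (fun i x => if i = j then fderiv ℝ h x else 0) ∅ Set.countable_empty ?_ ?_ ?_
  · have : ∀ x, ∑ i, (if i = j then fderiv ℝ h x else 0) (Pi.single i 1)
        = fderiv ℝ h x (Pi.single j 1) := by
      intro x
      rw [Finset.sum_eq_single j] <;> simp +contextual
    simp only [this] at hdiv
    rw [hdiv]
    refine Finset.sum_eq_zero fun i _ => ?_
    by_cases hij : i = j
    · subst hij
      simp only [if_true]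
      rw [sub_eq_zero]
      congr 1
      ext x
      rw [← hper (i.insertNth ((0 : Fin (m + 1) → ℝ) i) x) (Pi.single i 1)]
      congr 1
      ext l
      refine Fin.succAboveCases i ?_ (fun l => ?_) l
      · simp
      · simp
    · simp [hij]
  · intro i
    split_ifs
    · exact hh.continuous.continuousOn
    · exact continuousOn_const
  · intro x _ i
    split_ifs
    · exact (hh.differentiable one_ne_zero x).hasFDerivAt
    · exact hasFDerivAt_const _ _
  · refine Continuous.integrableOn_Icc (continuous_finsetSum _ fun i _ => ?_)
    split_ifs
    · exact (hh.continuous_fderiv one_ne_zero).clm_apply continuous_const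
    · exact continuous_const

theorem mFourier_coe_eq_exp {n : ℕ} (k : Fin n → ℤ) (x : Fin n → ℝ) :
    UnitAddTorus.mFourier k (fun i => (x i : UnitAddCircle))
      = Complex.exp (2 * Real.pi * Complex.I * ∑ i, (k i : ℂ) * (x i : ℂ)) := by
  simp only [UnitAddTorus.mFourier, ContinuousMap.coe_mk, fourier_coe_apply]
  rw [← Complex.exp_sum, Finset.mul_sum]
  congr 1
  refine Finset.sum_congr rfl fun i _ => ?_
  push_cast
  ring

theorem hasFDerivAt_mFourier_coe {n : ℕ} (k : Fin n → ℤ) (x : Fin n → ℝ) :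
    HasFDerivAt (fun x : Fin n → ℝ => UnitAddTorus.mFourier k (fun i => (x i : UnitAddCircle)))
      (UnitAddTorus.mFourier k (fun i => (x i : UnitAddCircle)) •
        ((2 * Real.pi * Complex.I : ℂ) • ∑ i, (k i : ℂ) •
          Complex.ofRealCLM.comp (ContinuousLinearMap.proj (R := ℝ) (φ := fun _ : Fin n => ℝ) i)))
      x := by
  simp only [mFourier_coe_eq_exp]
  refine HasFDerivAt.cexp (HasFDerivAt.const_mul (HasFDerivAt.fun_sum fun i _ => ?_) _)
  exact HasFDerivAt.const_mul
    (Complex.ofRealCLM.comp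
      (ContinuousLinearMap.proj (R := ℝ) (φ := fun _ : Fin n => ℝ) i)).hasFDerivAt _

theorem contDiff_mFourier_coe {n : ℕ} (k : Fin n → ℤ) :
    ContDiff ℝ 1
      (fun x : Fin n → ℝ => UnitAddTorus.mFourier k (fun i => (x i : UnitAddCircle))) := by
  simp only [mFourier_coe_eq_exp]
  refine ContDiff.cexp (contDiff_const.mul (ContDiff.sum fun i _ => contDiff_const.mul ?_))
  exact Complex.ofRealCLM.contDiff.comp (contDiff_apply ℝ ℝ i)

theorem continuous_pd {n : ℕ} {f : (Fin n → ℝ) → ℝ} (hf : ContDiff ℝ 1 f) (j : Fin n) :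
    Continuous (pd f j) :=
  (hf.continuous_fderiv one_ne_zero).clm_apply continuous_const

theorem integrableOn_unitCell_of_continuous {n : ℕ} {E : Type*} [NormedAddCommGroup E]
    {f : (Fin n → ℝ) → E} (hf : Continuous f) : IntegrableOn f (unitCell n) :=
  hf.integrableOn_Icc.congr_set_ae (unitCell_ae_eq_Icc n)

theorem cellFourierCoeff_pd {n : ℕ} {f : (Fin n → ℝ) → ℝ} (hf : ContDiff ℝ 1 f)
    (hper : IsPeriodic f) (j : Fin n) (k : Fin n → ℤ) :
    cellFourierCoeff (pd f j) k = 2 * Real.pi * Complex.I * k j * cellFourierCoeff f k := by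
  have hfC : ContDiff ℝ 1 fun x => (f x : ℂ) := Complex.ofRealCLM.contDiff.comp hf
  have hE := contDiff_mFourier_coe (-k)
  have hz := integral_fderiv_apply_single_eq_zero (hE.mul hfC) (fun x l => by
    have : (fun i => ((x i + (l i : ℝ) : ℝ) : UnitAddCircle)) = fun i => (x i : UnitAddCircle) := by
      ext i
      simp
    simp only [hper x l, Pi.add_apply, this]) j
  have hpt : ∀ x, fderiv ℝ (fun x : Fin n → ℝ =>
      UnitAddTorus.mFourier (-k) (fun i => (x i : UnitAddCircle)) * (f x : ℂ)) x (Pi.single j 1)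
      = UnitAddTorus.mFourier (-k) (fun i => (x i : UnitAddCircle)) * (pd f j x : ℂ)
        - 2 * Real.pi * Complex.I * k j *
          (UnitAddTorus.mFourier (-k) (fun i => (x i : UnitAddCircle)) * (f x : ℂ)) := by
    intro x
    have h1 : HasFDerivAt (fun x => (f x : ℂ)) (Complex.ofRealCLM.comp (fderiv ℝ f x)) x :=
      Complex.ofRealCLM.hasFDerivAt.comp x (hf.differentiable one_ne_zero x).hasFDerivAt
    have h3 := ((hasFDerivAt_mFourier_coe (-k) x).mul h1).fderiv
    simp only [Pi.mul_def] at h3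
    rw [h3]
    have h2 : ∑ i, (k i : ℂ) * (((Pi.single j (1 : ℝ) : Fin n → ℝ) i : ℝ) : ℂ) = k j := by
      rw [Finset.sum_eq_single j] <;> simp +contextual
    simp [pd, h2]
    ring
  simp only [hpt] at hz
  rw [integral_sub, integral_const_mul, sub_eq_zero] at hz
  · exact hz
  · exact integrableOn_unitCell_of_continuous
      (hE.continuous.mul (Complex.continuous_ofReal.comp (continuous_pd hf j)))
  · exact integrableOn_unitCell_of_continuous
      (continuous_const.mul (hE.continuous.mul hfC.continuous))

theorem integral_pd_mul_pd_swap {n : ℕ} {f g : (Fin n → ℝ) → ℝ} (hf : ContDiff ℝ 1 f)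
    (hfper : IsPeriodic f) (hg : ContDiff ℝ 1 g) (hgper : IsPeriodic g) (i j : Fin n) :
    ∫ x in unitCell n, pd f i x * pd g j x = ∫ x in unitCell n, pd f j x * pd g i x := by
  have h1 := hasSum_cellFourierCoeff (continuous_pd hf i) (continuous_pd hg j)
  have h2 := hasSum_cellFourierCoeff (continuous_pd hf j) (continuous_pd hg i)
  simp only [cellFourierCoeff_pd, hf, hfper, hg, hgper] at h1 h2
  refine Complex.ofReal_injective (h1.unique (h2.congr_fun fun k => ?_))
  simp only [map_mul, Complex.conj_ofReal, Complex.conj_I, map_ofNat, map_intCast]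
  ring

theorem hasSum_norm_sq_cellFourierCoeff {n : ℕ} {f : (Fin n → ℝ) → ℝ} (hf : Continuous f) :
    HasSum (fun k => ‖cellFourierCoeff f k‖ ^ 2) (∫ x in unitCell n, f x ^ 2) := by
  have h := hasSum_cellFourierCoeff hf hf
  have : ∀ k, starRingEnd ℂ (cellFourierCoeff f k) * cellFourierCoeff f k
      = ((‖cellFourierCoeff f k‖ ^ 2 : ℝ) : ℂ) := fun k => by
    rw [Complex.conj_mul']
    push_cast
    rfl
  simp only [this, ← pow_two] at h
  exact Complex.hasSum_ofReal.1 h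

/-- **Poincaré inequality** for periodic functions of zero mean. -/
theorem pi_sq_mul_integral_sq_le {n : ℕ} {f : (Fin n → ℝ) → ℝ} (hf : ContDiff ℝ 1 f)
    (hper : IsPeriodic f) (hmean : ∫ x in unitCell n, f x = 0) :
    Real.pi ^ 2 * ∫ x in unitCell n, f x ^ 2 ≤ ∑ j, ∫ x in unitCell n, pd f j x ^ 2 := by
  refine hasSum_le (fun k => ?_) ((hasSum_norm_sq_cellFourierCoeff hf.continuous).mul_left _)
    (hasSum_sum fun j _ => hasSum_norm_sq_cellFourierCoeff (continuous_pd hf j))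
  by_cases hk : k = 0
  · have : cellFourierCoeff f 0 = 0 := by
      simp [cellFourierCoeff, UnitAddTorus.mFourier_zero, integral_complex_ofReal, hmean]
    simp only [hk, this]
    simpa using Finset.sum_nonneg fun _ _ => by positivity
  · obtain ⟨j, hj⟩ := Function.ne_iff.1 hk
    refine le_trans ?_ (Finset.single_le_sum (f := fun j => ‖cellFourierCoeff (pd f j) k‖ ^ 2)
      (fun _ _ => by positivity) (Finset.mem_univ j))
    have hkj : (1 : ℝ) ≤ (k j : ℝ) ^ 2 := by
      have : (1 : ℤ) ≤ k j ^ 2 := by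
        have := sq_pos_of_ne_zero hj
        omega
      exact_mod_cast this
    have hn : ‖(2 * Real.pi * Complex.I * k j : ℂ)‖ ^ 2 = 4 * Real.pi ^ 2 * (k j : ℝ) ^ 2 := by
      simp [mul_pow, sq_abs]
      norm_num
    rw [cellFourierCoeff_pd hf hper, norm_mul, mul_pow, hn]
    gcongr
    nlinarith [sq_nonneg Real.pi]

theorem sq_frobInner_add_dotc_le {n : ℕ} (P D : Matrix (Fin n) (Fin n) ℝ) (q w : Fin n → ℝ) :
    (frobInner P D + dotc q w) ^ 2 ≤ (frobSq P + euclSq q) * (frobSq D + euclSq w) := by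
  have h := Finset.sum_mul_sq_le_sq_mul_sq Finset.univ
    (Sum.elim (fun p : Fin n × Fin n => P p.1 p.2) q)
    (Sum.elim (fun p : Fin n × Fin n => D p.1 p.2) w)
  simpa only [Fintype.sum_sum_type, Fintype.sum_prod_type, Sum.elim_inl, Sum.elim_inr, frobInner, dotc,
    frobSq, euclSq] using h

theorem frobSq_nonneg {n : ℕ} (M : Matrix (Fin n) (Fin n) ℝ) : 0 ≤ frobSq M :=
  Finset.sum_nonneg fun _ _ => Finset.sum_nonneg fun _ _ => sq_nonneg _

theorem euclSq_nonneg {n : ℕ} (v : Fin n → ℝ) : 0 ≤ euclSq v :=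
  Finset.sum_nonneg fun _ _ => sq_nonneg _

theorem frobInner_one_left {n : ℕ} (M : Matrix (Fin n) (Fin n) ℝ) :
    frobInner 1 M = M.trace := by
  simp [frobInner, Matrix.one_apply, Matrix.trace]

theorem frobInner_sub_left {n : ℕ} (M N D : Matrix (Fin n) (Fin n) ℝ) :
    frobInner (M - N) D = frobInner M D - frobInner N D := by
  simp [frobInner, sub_mul]

theorem frobSq_smul_sub_one {n : ℕ} (s : ℝ) (M : Matrix (Fin n) (Fin n) ℝ) :
    frobSq (s • M - 1) = s ^ 2 * frobSq M - 2 * s * M.trace + n := by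
  have h : ∀ i j, ((s • M - 1) i j) ^ 2 = s ^ 2 * M i j ^ 2
      - 2 * s * ((1 : Matrix (Fin n) (Fin n) ℝ) i j * M i j)
      + (1 : Matrix (Fin n) (Fin n) ℝ) i j := by
    intro i j
    by_cases hij : i = j
    · subst hij
      simp
      ring
    · simp [hij]
      ring
  simp only [frobSq, h, Finset.sum_add_distrib, Finset.sum_sub_distrib, ← Finset.mul_sum]
  rw [← frobInner_one_left, frobInner]
  simp [Matrix.one_apply]

theorem frobInner_sub_transpose_self {n : ℕ} (D : Matrix (Fin n) (Fin n) ℝ) :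
    frobInner (D - D.transpose) (D - D.transpose)
      = 2 * (frobSq D - ∑ i, ∑ j, D i j * D j i) := by
  have h : ∀ i j, (D - D.transpose) i j * (D - D.transpose) i j
      = D i j ^ 2 + D j i ^ 2 - 2 * (D i j * D j i) := by
    intro i j
    simp
    ring
  have hc : ∑ i, ∑ j, D j i ^ 2 = ∑ i, ∑ j, D i j ^ 2 := Finset.sum_comm
  simp only [frobInner, frobSq, h, Finset.sum_add_distrib, Finset.sum_sub_distrib, hc,
    ← Finset.mul_sum]
  ring

theorem trace_pos_of_elliptic {n : ℕ} (hn : 1 ≤ n) {M : Matrix (Fin n) (Fin n) ℝ} {lam : ℝ}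
    (hlam : 0 < lam) (h : ∀ ξ : Fin n → ℝ, lam * euclSq ξ ≤ dotc ξ (M.mulVec ξ)) :
    0 < M.trace := by
  have hd : ∀ i, 0 < M i i := fun i => by
    have := h (Pi.single i 1)
    simp [euclSq, dotc, Pi.single_apply] at this
    linarith
  exact Finset.sum_pos (fun i _ => hd i) ⟨⟨0, hn⟩, Finset.mem_univ _⟩

/-- The Cordes condition: the renormalized coefficients are close to `(I, 0)`. -/
theorem frobSq_gam_smul_sub_one_add_le {n : ℕ} {A : (Fin n → ℝ) → Matrix (Fin n) (Fin n) ℝ}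
    {b : (Fin n → ℝ) → Fin n → ℝ} {x : Fin n → ℝ} {δ : ℝ} (hpos : 0 < (n : ℝ) - 1 + δ)
    (ht : 0 < (A x).trace)
    (hc : (frobSq (A x) + euclSq (b x)) / (A x).trace ^ 2 ≤ 1 / ((n : ℝ) - 1 + δ)) :
    frobSq (gam A b x • A x - 1) + euclSq (gam A b x • b x) ≤ 1 - δ := by
  have hE := euclSq_nonneg (b x)
  have hF : 0 < frobSq (A x) := by
    have h := sq_frobInner_add_dotc_le 1 (A x) 0 0
    rw [frobInner_one_left] at h
    simp only [dotc, euclSq, Pi.zero_apply, mul_zero, Finset.sum_const_zero, add_zero, ne_eq,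
      OfNat.ofNat_ne_zero, not_false_eq_true, zero_pow] at h
    refine (frobSq_nonneg (A x)).lt_of_ne fun h0 => ?_
    rw [← h0, mul_zero] at h
    exact absurd h (not_le.2 (by positivity))
  have hS : 0 < frobSq (A x) + euclSq (b x) := by positivity
  have hsm : euclSq (gam A b x • b x) = gam A b x ^ 2 * euclSq (b x) := by
    simp [euclSq, mul_pow, Finset.mul_sum]
  rw [div_le_div_iff₀ (by positivity) hpos] at hc
  have hkey : (n : ℝ) - 1 + δ ≤ (A x).trace ^ 2 / (frobSq (A x) + euclSq (b x)) := by
    rw [le_div_iff₀ hS]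
    linarith
  rw [frobSq_smul_sub_one, hsm]
  have : gam A b x ^ 2 * frobSq (A x) - 2 * gam A b x * (A x).trace + n
      + gam A b x ^ 2 * euclSq (b x)
      = n - (A x).trace ^ 2 / (frobSq (A x) + euclSq (b x)) := by
    rw [gam]
    field_simp
    ring
  linarith

theorem one_sub_kappa (n : ℕ) (δ : ℝ) :
    1 - kappa n δ = (1 - δ) * (1 + n / Real.pi ^ 2) := by
  have := Real.pi_pos
  rw [kappa]
  field_simp
  ring

theorem abs_mul_le_sqrt_mul_of_sq_le {d g s ε c : ℝ} (hε : 0 ≤ ε) (hc : 0 < c) (hs : 0 ≤ s)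
    (h : g ^ 2 ≤ ε * s) : |d * g| ≤ √(ε * c) * ((d ^ 2 + s / c) / 2) := by
  have hg : |g| ≤ √(ε * c) * √(s / c) := by
    rw [← Real.sqrt_mul (by positivity)]
    refine Real.abs_le_sqrt (h.trans_eq ?_)
    field_simp
  have hy : |d| * √(s / c) ≤ (d ^ 2 + s / c) / 2 := by
    nlinarith [sq_nonneg (|d| - √(s / c)), Real.sq_sqrt (show 0 ≤ s / c by positivity), sq_abs d]
  calc |d * g| = |d| * |g| := abs_mul d g
    _ ≤ |d| * (√(ε * c) * √(s / c)) := by gcongr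
    _ = √(ε * c) * (|d| * √(s / c)) := by ring
    _ ≤ _ := by gcongr

section VectorField

variable {n : ℕ} {w : (Fin n → ℝ) → Fin n → ℝ}

theorem continuous_jac_apply (hw : ContDiff ℝ 1 w) (i j : Fin n) :
    Continuous fun x => jac w x i j :=
  continuous_pd (contDiff_pi.1 hw i) j

theorem continuous_frobSq_jac (hw : ContDiff ℝ 1 w) : Continuous fun x => frobSq (jac w x) :=
  continuous_finsetSum _ fun i _ => continuous_finsetSum _ fun j _ =>
    (continuous_jac_apply hw i j).pow 2

theorem continuous_divg (hw : ContDiff ℝ 1 w) : Continuous (divg w) :=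
  continuous_finsetSum _ fun i _ => continuous_jac_apply hw i i

theorem integral_jac_mul_jac_transpose (hw : ContDiff ℝ 1 w) (hper : IsPeriodic w) :
    ∫ x in unitCell n, ∑ i, ∑ j, jac w x i j * jac w x j i
      = ∫ x in unitCell n, divg w x ^ 2 := by
  have hc := fun i => contDiff_pi.1 hw i
  have hp : ∀ i, IsPeriodic fun y => w y i := fun i x k => congrFun (hper x k) i
  have hint : ∀ i j k l, IntegrableOn (fun x => jac w x i j * jac w x k l) (unitCell n) :=
    fun i j k l => integrableOn_unitCell_of_continuous
      ((continuous_jac_apply hw i j).mul (continuous_jac_apply hw k l))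
  have hd : ∀ x, divg w x ^ 2 = ∑ i, ∑ j, jac w x i i * jac w x j j := fun x => by
    rw [pow_two, divg, Finset.sum_mul_sum]
    rfl
  simp only [hd]
  rw [integral_finsetSum _ fun i _ => integrable_finsetSum _ fun j _ => hint _ _ _ _,
    integral_finsetSum _ fun i _ => integrable_finsetSum _ fun j _ => hint _ _ _ _]
  refine Finset.sum_congr rfl fun i _ => ?_
  rw [integral_finsetSum _ fun j _ => hint _ _ _ _, integral_finsetSum _ fun j _ => hint _ _ _ _]
  exact Finset.sum_congr rfl fun j _ =>
    integral_pd_mul_pd_swap (hc i) (hp i) (hc j) (hp j) j i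

/-- The integral of `|Dw|²` splits into a divergence part and a rotation part. -/
theorem integral_divg_sq_add_half_integral_rot (hw : ContDiff ℝ 1 w) (hper : IsPeriodic w) :
    (∫ x in unitCell n, divg w x ^ 2) + (1 / 2) * ∫ x in unitCell n,
      frobInner (jac w x - (jac w x).transpose) (jac w x - (jac w x).transpose)
      = ∫ x in unitCell n, frobSq (jac w x) := by
  have hi : IntegrableOn (fun x => ∑ i, ∑ j, jac w x i j * jac w x j i) (unitCell n) :=
    integrableOn_unitCell_of_continuous (continuous_finsetSum _ fun i _ =>
      continuous_finsetSum _ fun j _ =>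
        (continuous_jac_apply hw i j).mul (continuous_jac_apply hw j i))
  simp only [frobInner_sub_transpose_self]
  rw [integral_const_mul, integral_sub (integrableOn_unitCell_of_continuous
    (continuous_frobSq_jac hw)) hi, integral_jac_mul_jac_transpose hw hper]
  ring

theorem integral_divg_sq_le (hw : ContDiff ℝ 1 w) (hper : IsPeriodic w) :
    ∫ x in unitCell n, divg w x ^ 2 ≤ ∫ x in unitCell n, frobSq (jac w x) := by
  rw [← integral_divg_sq_add_half_integral_rot hw hper]
  have : 0 ≤ ∫ x in unitCell n,
      frobInner (jac w x - (jac w x).transpose) (jac w x - (jac w x).transpose) :=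
    integral_nonneg fun x => Finset.sum_nonneg fun _ _ => Finset.sum_nonneg fun _ _ =>
      mul_self_nonneg _
  linarith

theorem pi_sq_mul_integral_euclSq_le (hw : ContDiff ℝ 1 w) (hper : IsPeriodic w)
    (hmean : (∫ x in unitCell n, w x) = 0) :
    Real.pi ^ 2 * ∫ x in unitCell n, euclSq (w x) ≤ ∫ x in unitCell n, frobSq (jac w x) := by
  have hc := fun i => contDiff_pi.1 hw i
  have hm : ∀ i, ∫ x in unitCell n, w x i = 0 := fun i => by
    rw [← eval_integral fun j => integrableOn_unitCell_of_continuous (hc j).continuous, hmean]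
    rfl
  have hint : ∀ i j, IntegrableOn (fun x => jac w x i j ^ 2) (unitCell n) := fun i j =>
    integrableOn_unitCell_of_continuous ((continuous_jac_apply hw i j).pow 2)
  have hintw : ∀ i, IntegrableOn (fun x => w x i ^ 2) (unitCell n) := fun i =>
    integrableOn_unitCell_of_continuous ((hc i).continuous.pow 2)
  simp only [euclSq, frobSq]
  rw [integral_finsetSum _ fun i _ => hintw i, Finset.mul_sum,
    integral_finsetSum _ fun i _ => integrable_finsetSum _ fun j _ => hint i j]
  refine Finset.sum_le_sum fun i _ => ?_
  rw [integral_finsetSum _ fun j _ => hint i j]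
  exact pi_sq_mul_integral_sq_le (hc i) (fun x k => congrFun (hper x k) i) (hm i)

end VectorField

/-- In Setting B, the bilinear form `B₂` is coercive: for every `C¹`
periodic vector field `w` with zero mean over `Y`,
`B₂(w,w) ≥ (1 − √(1−κ)) ∫_Y |Dw|²`. -/
theorem stmt_8 {n : ℕ} (hn : 1 ≤ n)
    (A : (Fin n → ℝ) → Matrix (Fin n) (Fin n) ℝ) (b : (Fin n → ℝ) → Fin n → ℝ)
    (lam Lam δ : ℝ) (hAB : SettingB A b lam Lam δ) :
    ∀ w : (Fin n → ℝ) → Fin n → ℝ, ContDiff ℝ 1 w → IsPeriodic w →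
      (∫ x in unitCell n, w x) = 0 →
      B2 A b w w
        ≥ (1 - Real.sqrt (1 - kappa n δ)) * ∫ x in unitCell n, frobSq (jac w x) := by
  intro w hw hper hmean
  have hn' : (1 : ℝ) ≤ n := by exact_mod_cast hn
  have hpi := Real.pi_pos
  have hδ : 0 < δ := lt_of_le_of_lt (by positivity) hAB.delta_mem.1
  have hδ1 : 0 ≤ 1 - δ := sub_nonneg.2 hAB.delta_mem.2
  set c : ℝ := 1 + n / Real.pi ^ 2 with hcdef
  have hc : 0 < c := by positivity
  set r : ℝ := √(1 - kappa n δ) with hr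
  rw [one_sub_kappa] at hr
  have hr0 : 0 ≤ r := Real.sqrt_nonneg _
  set J := ∫ x in unitCell n, frobSq (jac w x) with hJ
  have hJ0 : 0 ≤ J := integral_nonneg fun x => frobSq_nonneg _
  have hwc := fun i => (contDiff_pi.1 hw i).continuous
  set G : (Fin n → ℝ) → ℝ := fun x =>
    frobInner (gam A b x • A x - 1) (jac w x) + dotc (gam A b x • b x) (w x) with hG
  set S : (Fin n → ℝ) → ℝ := fun x => frobSq (jac w x) + euclSq (w x) with hS
  have hS0 : ∀ x, 0 ≤ S x := fun x => add_nonneg (frobSq_nonneg _) (euclSq_nonneg _)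
  have hEint : IntegrableOn (fun x => euclSq (w x)) (unitCell n) :=
    integrableOn_unitCell_of_continuous (continuous_finsetSum _ fun i _ => (hwc i).pow 2)
  have hDint := integrableOn_unitCell_of_continuous (continuous_frobSq_jac hw)
  have hdint : IntegrableOn (fun x => divg w x ^ 2) (unitCell n) :=
    integrableOn_unitCell_of_continuous ((continuous_divg hw).pow 2)
  have hSint : IntegrableOn S (unitCell n) := hDint.add hEint
  have hbound : ∀ᵐ x ∂volume.restrict (unitCell n),
      |divg w x * G x| ≤ r * ((divg w x ^ 2 + S x / c) / 2) := by
    refine ae_restrict_of_ae ?_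
    filter_upwards [hAB.ellip, hAB.cordes] with x hell hcor
    have ht := trace_pos_of_elliptic hn hAB.lam_pos fun ξ => (hell ξ).1
    rw [hr]
    refine abs_mul_le_sqrt_mul_of_sq_le hδ1 hc (hS0 x) ((sq_frobInner_add_dotc_le _ _ _ _).trans ?_)
    exact mul_le_mul_of_nonneg_right
      (frobSq_gam_smul_sub_one_add_le (by linarith) ht hcor) (hS0 x)
  have hmaj : IntegrableOn (fun x => r * ((divg w x ^ 2 + S x / c) / 2)) (unitCell n) :=
    ((hdint.add (hSint.div_const c)).div_const 2).const_mul r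
  have hGmeas : Measurable G := by
    have hmA := hAB.measA
    have hmb := hAB.measb
    have hmD : ∀ i j, Measurable fun x => jac w x i j := fun i j =>
      (continuous_jac_apply hw i j).measurable
    have hmw : ∀ i, Measurable fun x => w x i := fun i => (hwc i).measurable
    have hmg : Measurable (gam A b) := by
      unfold gam frobSq euclSq Matrix.trace Matrix.diag
      fun_prop
    simp only [hG, frobInner, dotc, Matrix.sub_apply, Matrix.smul_apply, Pi.smul_apply,
      smul_eq_mul]
    fun_prop
  have hdG : IntegrableOn (fun x => divg w x * G x) (unitCell n) :=
    hmaj.mono' ((continuous_divg hw).measurable.mul hGmeas).aestronglyMeasurable hbound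
  have hB : B2 A b w w = J + ∫ x in unitCell n, divg w x * G x := by
    have hsplit : ∀ x, divg w x * (frobInner (gam A b x • A x) (jac w x)
        + dotc (gam A b x • b x) (w x)) = divg w x ^ 2 + divg w x * G x := fun x => by
      have : frobInner 1 (jac w x) = divg w x := frobInner_one_left _
      simp only [hG, frobInner_sub_left, this]
      ring
    rw [B2]
    simp only [hsplit]
    rw [integral_add hdint hdG, hJ, ← integral_divg_sq_add_half_integral_rot hw hper]
    ring
  have hlow : -(r * J) ≤ ∫ x in unitCell n, divg w x * G x := by
    have h1 : -∫ x in unitCell n, r * ((divg w x ^ 2 + S x / c) / 2)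
        ≤ ∫ x in unitCell n, divg w x * G x := by
      rw [← integral_neg]
      refine integral_mono_ae hmaj.neg hdG ?_
      filter_upwards [hbound] with x hx
      exact (abs_le.1 hx).1
    have h2 : ∫ x in unitCell n, r * ((divg w x ^ 2 + S x / c) / 2)
        = r * (((∫ x in unitCell n, divg w x ^ 2) + (∫ x in unitCell n, S x) / c) / 2) := by
      rw [integral_const_mul, integral_div, integral_add hdint (hSint.div_const c), integral_div]
    have h3 : (∫ x in unitCell n, S x) / c ≤ J := by
      rw [div_le_iff₀ hc, hS, integral_add hDint hEint, hcdef, mul_add, mul_one]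
      have h4 := pi_sq_mul_integral_euclSq_le hw hper hmean
      have h5 : ∫ x in unitCell n, euclSq (w x) ≤ J / Real.pi ^ 2 := by
        rw [le_div_iff₀ (by positivity)]
        linarith
      have h6 : J / Real.pi ^ 2 ≤ J * (n / Real.pi ^ 2) := by
        rw [mul_div_assoc', mul_comm]
        gcongr
        exact le_mul_of_one_le_left hJ0 hn'
      linarith
    have h7 := integral_divg_sq_le hw hper
    have h8 : r * (((∫ x in unitCell n, divg w x ^ 2) + (∫ x in unitCell n, S x) / c) / 2)
        ≤ r * J := mul_le_mul_of_nonneg_left (by linarith) hr0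
    linarith
  rw [hB]
  linarith
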